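/- arXiv:1209.3547 — 9 statements merged into one kernel-verified Lean document; each statement's English description precedes it below -/
import Mathlib

section
/- The function x ↦ cos(√x) is convex on the interval [0, π²]. -/
open Real

/-- The function `sin t / t` is antitone on `(0, π)`. -/
theorem antitoneOn_sin_div_self : AntitoneOn (fun t : ℝ => sin t / t) (Set.Ioo 0 π) := by
  intro a ha b hb hab
  have hslope := strictConcaveOn_sin_Icc.concaveOn.slope_anti
    (Set.left_mem_Icc.2 pi_pos.le) (a := a) (b := b)
    ⟨⟨ha.1.le, ha.2.le⟩, ha.1.ne'⟩ ⟨⟨hb.1.le, hb.2.le⟩, hb.1.ne'⟩ hab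
  simpa [slope_def_field] using hslope

/-- The derivative of `cos (√x)` at a positive point. -/
theorem hasDerivAt_cos_sqrt {x : ℝ} (hx : 0 < x) :
    HasDerivAt (fun x : ℝ => cos (√x)) (-(sin (√x) / √x) / 2) x := by
  convert (hasDerivAt_sqrt hx.ne').cos using 1
  field_simp

/-- The function `x ↦ cos (√x)` is convex on the interval `[0, π²]`. -/
theorem cos_sqrt_convexOn :
    ConvexOn ℝ (Set.Icc (0 : ℝ) (Real.pi ^ 2)) (fun x : ℝ => Real.cos (Real.sqrt x)) := by
  have sqrt_mem {x : ℝ} (hx : x ∈ Set.Ioo 0 (π ^ 2)) : √x ∈ Set.Ioo 0 π :=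
    ⟨sqrt_pos.2 hx.1, (sqrt_lt' pi_pos).2 hx.2⟩
  apply MonotoneOn.convexOn_of_deriv (convex_Icc _ _)
  · fun_prop
  · rw [interior_Icc]
    exact fun x hx => (hasDerivAt_cos_sqrt hx.1).differentiableAt.differentiableWithinAt
  · rw [interior_Icc]
    intro x hx y hy hxy
    rw [(hasDerivAt_cos_sqrt hx.1).deriv, (hasDerivAt_cos_sqrt hy.1).deriv]
    have h := antitoneOn_sin_div_self (sqrt_mem hx) (sqrt_mem hy) (sqrt_le_sqrt hxy)
    dsimp only at h
    linarith
end

section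
/- For every real θ with -π ≤ θ ≤ π, one has 5/2 - (8/3)·cos θ + (1/6)·cos(2θ) ≤ θ². -/
open Real

theorem eight_mul_sin_sub_sin_two_mul_le {x : ℝ} (hx : 0 ≤ x) :
    (8 / 3) * sin x - (1 / 3) * sin (2 * x) ≤ 2 * x := by
  let g : ℝ → ℝ := fun t => 2 * t - ((8 / 3) * sin t - (1 / 3) * sin (2 * t))
  have hg (t : ℝ) : HasDerivAt g ((4 / 3) * (1 - cos t) ^ 2) t := by
    have h2 : HasDerivAt (fun t : ℝ => 2 * t) 2 t := by
      simpa using (hasDerivAt_id t).const_mul 2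
    refine (h2.sub (((hasDerivAt_sin t).const_mul (8 / 3)).sub
      (h2.sin.const_mul (1 / 3)))).congr_deriv ?_
    rw [cos_two_mul]
    ring
  have hmono : Monotone g := monotone_of_hasDerivAt_nonneg hg fun t => by positivity
  have h := hmono hx
  simp only [g, mul_zero, sin_zero, sub_zero] at h
  linarith

theorem f2_le_sq_of_nonneg {x : ℝ} (hx : 0 ≤ x) :
    5 / 2 - (8 / 3) * cos x + (1 / 6) * cos (2 * x) ≤ x ^ 2 := by
  let f : ℝ → ℝ := fun t => t ^ 2 - (5 / 2 - (8 / 3) * cos t + (1 / 6) * cos (2 * t))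
  have hf (t : ℝ) :
      HasDerivAt f (2 * t - ((8 / 3) * sin t - (1 / 3) * sin (2 * t))) t := by
    have h2 : HasDerivAt (fun t : ℝ => 2 * t) 2 t := by
      simpa using (hasDerivAt_id t).const_mul 2
    refine ((hasDerivAt_pow 2 t).sub ((((hasDerivAt_cos t).const_mul (8 / 3)).const_sub
      (5 / 2)).add (h2.cos.const_mul (1 / 6)))).congr_deriv ?_
    push_cast
    ring
  have hmono : MonotoneOn f (Set.Ici 0) := by
    refine monotoneOn_of_hasDerivWithinAt_nonneg (convex_Ici 0)
      (fun t _ => (hf t).continuousAt.continuousWithinAt)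
      (fun t _ => (hf t).hasDerivWithinAt) fun t ht => ?_
    rw [interior_Ici] at ht
    exact sub_nonneg.2 (eight_mul_sin_sub_sin_two_mul_le ht.le)
  have h := hmono Set.self_mem_Ici hx hx
  norm_num [f] at h
  linarith

/-- For every real `θ` with `-π ≤ θ ≤ π`, one has
`5/2 - (8/3)·cos θ + (1/6)·cos (2θ) ≤ θ²`. -/
theorem f2_le_sq (θ : ℝ) (h1 : -Real.pi ≤ θ) (h2 : θ ≤ Real.pi) :
    5 / 2 - (8 / 3) * Real.cos θ + (1 / 6) * Real.cos (2 * θ) ≤ θ ^ 2 := by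
  rcases le_total 0 θ with h | h
  · exact f2_le_sq_of_nonneg h
  · simpa using f2_le_sq_of_nonneg (neg_nonneg.2 h)
end

section
/- For every real θ with -π ≤ θ ≤ π, one has θ² ≤ (π²/2)·(1 - cos θ) - (π²/4 - 1)·(1 - cos(2θ))/2. -/
open Real

/-- The degree-four Taylor polynomial of the cosine at `0` bounds it from above. -/
lemma cos_le_one_sub_sq_add_pow_four {x : ℝ} (hx : 0 ≤ x) :
    cos x ≤ 1 - x ^ 2 / 2 + x ^ 4 / 24 := by
  have hd (y : ℝ) : HasDerivAt (fun y : ℝ => 1 - y ^ 2 / 2 + y ^ 4 / 24 - cos y)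
      (sin y - (y - y ^ 3 / 6)) y := by
    refine (((((hasDerivAt_pow 2 y).div_const 2).const_sub 1).add
      ((hasDerivAt_pow 4 y).div_const 24)).sub (hasDerivAt_cos y)).congr_deriv ?_
    push_cast
    ring
  have hmono : MonotoneOn (fun y : ℝ => 1 - y ^ 2 / 2 + y ^ 4 / 24 - cos y) (Set.Ici 0) := by
    refine monotoneOn_of_deriv_nonneg (convex_Ici 0)
      (fun y _ => (hd y).continuousAt.continuousWithinAt)
      (fun y _ => (hd y).differentiableAt.differentiableWithinAt) fun y hy => ?_
    rw [(hd y).deriv]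
    exact sub_nonneg.2 (sin_ge_sub_cube (interior_subset hy))
  have h := hmono Set.self_mem_Ici hx hx
  norm_num at h
  linarith

/-- Wilker's inequality `2 ≤ tan x / x + (sin x / x) ^ 2`, with denominators cleared. -/
lemma two_mul_cos_mul_sq_le {x : ℝ} (hx₀ : 0 ≤ x) (hx : x ≤ π / 2) :
    2 * cos x * x ^ 2 ≤ x * sin x + cos x * sin x ^ 2 := by
  have hc₀ : 0 ≤ cos x := cos_nonneg_of_mem_Icc ⟨by linarith [pi_pos], hx⟩
  have hx₂ : x ^ 2 ≤ 4 := by nlinarith [pi_le_four]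
  set p := 1 - x ^ 2 / 6 with hp
  have hp₀ : 0 ≤ p := by linarith
  have hs : x * p ≤ sin x := by
    have := sin_ge_sub_cube hx₀
    rw [hp]
    linarith
  have hc : cos x ≤ p ^ 3 := by
    have := cos_le_one_sub_sq_add_pow_four hx₀
    have : 0 ≤ x ^ 4 * (9 - x ^ 2) := mul_nonneg (by positivity) (by linarith)
    rw [hp]
    linarith
  have hp₂ : 0 ≤ 2 - p ^ 2 := by nlinarith [sq_nonneg x]
  have key : cos x * (2 - p ^ 2) ≤ p :=
    calc cos x * (2 - p ^ 2) ≤ p ^ 3 * (2 - p ^ 2) := by gcongr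
      _ ≤ p := by nlinarith [mul_nonneg hp₀ (sq_nonneg (p ^ 2 - 1))]
  calc 2 * cos x * x ^ 2 = x ^ 2 * (cos x * (2 - p ^ 2)) + cos x * (x * p) ^ 2 := by ring
    _ ≤ x ^ 2 * p + cos x * (x * p) ^ 2 := by gcongr
    _ = x * (x * p) + cos x * (x * p) ^ 2 := by ring
    _ ≤ x * sin x + cos x * sin x ^ 2 := by gcongr

lemma monotoneOn_sq_sub_sin_sq_div_sin_pow_four :
    MonotoneOn (fun x : ℝ => (x ^ 2 - sin x ^ 2) / sin x ^ 4) (Set.Ioc 0 (π / 2)) := by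
  have hs {x : ℝ} (hx : x ∈ Set.Ioc 0 (π / 2)) : 0 < sin x :=
    sin_pos_of_pos_of_lt_pi hx.1 (by linarith [hx.2, pi_pos])
  have hd {x : ℝ} (hx : x ∈ Set.Ioc 0 (π / 2)) :=
    ((hasDerivAt_pow 2 x).sub ((hasDerivAt_sin x).pow 2)).div ((hasDerivAt_sin x).pow 4)
      (pow_pos (hs hx) 4).ne'
  refine monotoneOn_of_deriv_nonneg (convex_Ioc _ _)
    (fun x hx => (hd hx).continuousAt.continuousWithinAt)
    (fun x hx => (hd (interior_subset hx)).differentiableAt.differentiableWithinAt)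
    fun x hx => ?_
  have hx := interior_subset hx
  refine (hd hx).deriv.symm ▸ div_nonneg ?_ (sq_nonneg _)
  have := mul_nonneg (pow_pos (hs hx) 3).le (sub_nonneg.2 (two_mul_cos_mul_sq_le hx.1.le hx.2))
  simp only [Pi.sub_apply, Pi.pow_apply]
  push_cast
  linarith

lemma four_mul_sq_le_sin {x : ℝ} (hx₀ : 0 ≤ x) (hx : x ≤ π / 2) :
    4 * x ^ 2 ≤ 4 * sin x ^ 2 + (π ^ 2 - 4) * sin x ^ 4 := by
  rcases hx₀.eq_or_lt with rfl | hpos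
  · simp
  have hs : 0 < sin x := sin_pos_of_pos_of_lt_pi hpos (by linarith [pi_pos])
  have h := monotoneOn_sq_sub_sin_sq_div_sin_pow_four ⟨hpos, hx⟩ ⟨by positivity, le_rfl⟩ hx
  simp only [sin_pi_div_two, one_pow, div_one] at h
  rw [div_le_iff₀ (by positivity)] at h
  linarith

/-- For every real `θ` with `-π ≤ θ ≤ π`, one has
`θ² ≤ (π²/2)·(1 - cos θ) - (π²/4 - 1)·(1 - cos (2θ))/2`. -/
theorem sq_le_f3 (θ : ℝ) (h1 : -Real.pi ≤ θ) (h2 : θ ≤ Real.pi) :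
    θ ^ 2 ≤ Real.pi ^ 2 / 2 * (1 - Real.cos θ)
      - (Real.pi ^ 2 / 4 - 1) * (1 - Real.cos (2 * θ)) / 2 := by
  have habs : |θ| ≤ π := abs_le.2 ⟨h1, h2⟩
  have h := four_mul_sq_le_sin (x := |θ| / 2) (by positivity) (by linarith)
  have hc : cos θ = 1 - 2 * sin (|θ| / 2) ^ 2 := by
    have := cos_two_mul (|θ| / 2)
    rw [mul_div_cancel₀ _ two_ne_zero, cos_abs, cos_sq'] at this
    linarith
  rw [div_pow, sq_abs] at h
  rw [cos_two_mul, hc]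
  linarith
end

section
/- Let p : ℕ → ℝ be a probability distribution (p_n ≥ 0, ∑_{n=0}^{∞} p_n = 1) whose mean μ := ∑_{n=0}^{∞} n·p_n is finite. Then the Shannon entropy H(p) := -∑_{n=0}^{∞} p_n ln p_n satisfies H(p) < ln(μ+1) + 1. -/
open Real

/-- The pointwise form of Gibbs' inequality. -/
lemma negMulLog_le_neg_mul_log_add_sub {x y : ℝ} (hx : 0 ≤ x) (hy : 0 < y) :
    negMulLog x ≤ -(x * log y) + y - x := by
  rcases hx.eq_or_lt with rfl | hx
  · simpa using hy.le
  · have h := mul_le_mul_of_nonneg_left (log_le_sub_one_of_pos (div_pos hy hx)) hx.le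
    rw [log_div hy.ne' hx.ne', mul_sub, mul_sub, mul_div_cancel₀ _ hx.ne'] at h
    rw [negMulLog]
    linarith

lemma hasSum_mul_exp_neg_mul_succ {t : ℝ} (ht : 0 < t) :
    HasSum (fun n : ℕ => t * exp (-(t * (n + 1)))) (t * exp (-t) * (1 - exp (-t))⁻¹) := by
  have h := (hasSum_geometric_of_lt_one (exp_pos (-t)).le
    (exp_lt_one_iff.mpr (neg_lt_zero.mpr ht))).mul_left (t * exp (-t))
  refine h.congr_fun fun n => ?_
  rw [← exp_nat_mul, mul_assoc, ← exp_add]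
  ring_nf

lemma mul_exp_neg_mul_inv_one_sub_exp_neg_lt_one {t : ℝ} (ht : 0 < t) :
    t * exp (-t) * (1 - exp (-t))⁻¹ < 1 := by
  have hlt : exp (-t) < 1 := exp_lt_one_iff.mpr (neg_lt_zero.mpr ht)
  rw [← div_eq_mul_inv, div_lt_one (sub_pos.mpr hlt)]
  have h := mul_lt_mul_of_pos_right (add_one_lt_exp ht.ne') (exp_pos (-t))
  rw [← exp_add, add_neg_cancel, exp_zero] at h
  linarith

/-- For a probability distribution `p` on `ℕ` with finite mean `μ`, the Shannon entropy
satisfies `H(p) < ln(μ+1) + 1`.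
(The convention `0·ln 0 = 0` holds automatically since `Real.log 0 = 0`.) -/
theorem entropy_lt_log_mean_add_one (p : ℕ → ℝ) (hp : ∀ n, 0 ≤ p n) (hsum : HasSum p 1)
    (μ : ℝ) (hμ : HasSum (fun n : ℕ => (n : ℝ) * p n) μ) :
    (-∑' n : ℕ, p n * Real.log (p n)) < Real.log (μ + 1) + 1 := by
  have hμ0 : 0 ≤ μ := hμ.nonneg fun n => mul_nonneg n.cast_nonneg (hp n)
  have hμ1 : 0 < μ + 1 := by linarith
  set t : ℝ := (μ + 1)⁻¹
  have ht : 0 < t := inv_pos.mpr hμ1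
  have hlogt : log t = -log (μ + 1) := log_inv _
  -- Compare `p` with the subprobability weights `t * exp (-(t * (n + 1)))`.
  have hle : ∀ n, negMulLog (p n) ≤
      (log (μ + 1) + t - 1) * p n + t * (n * p n) + t * exp (-(t * (n + 1))) := fun n => by
    have h := negMulLog_le_neg_mul_log_add_sub (hp n)
      (mul_pos ht (exp_pos (-(t * ((n : ℝ) + 1)))))
    rw [log_mul ht.ne' (exp_pos _).ne', log_exp, hlogt] at h
    linarith
  have hbound := ((hsum.mul_left (log (μ + 1) + t - 1)).add (hμ.mul_left t)).add
    (hasSum_mul_exp_neg_mul_succ ht)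
  have hnonneg : ∀ n, 0 ≤ negMulLog (p n) := fun n =>
    negMulLog_nonneg (hp n) (le_hasSum hsum n fun m _ => hp m)
  have hentropy := (Summable.of_nonneg_of_le hnonneg hle hbound.summable).hasSum
  have hcmp := hasSum_le hle hentropy hbound
  have hneg : -∑' n, p n * log (p n) = ∑' n, negMulLog (p n) := by
    simp only [negMulLog_eq_neg, tsum_neg]
  have htμ : t * (μ + 1) = 1 := inv_mul_cancel₀ hμ1.ne'
  have hlt := mul_exp_neg_mul_inv_one_sub_exp_neg_lt_one ht
  rw [hneg]
  linarith
end

section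
/- Let p : ℤ → ℝ be a probability distribution (p_n ≥ 0, ∑_{n∈ℤ} p_n = 1), let g be any real number, and suppose M := ∑_{n∈ℤ} |n - g|·p_n is finite. Then the Shannon entropy H(p) := -∑_{n∈ℤ} p_n ln p_n satisfies H(p) < ln(2M + 1) + 1. -/
open Real

/-- The partition function of the two-sided exponential weights on `ℤ` centred at a real `g`. -/
lemma hasSum_exp_neg_mul_abs_sub (g : ℝ) {β : ℝ} (hβ : 0 < β) :
    HasSum (fun n : ℤ => exp (-β * |(n : ℝ) - g|))
      ((exp (-β * (1 - Int.fract g)) + exp (-β * Int.fract g)) * (1 - exp (-β))⁻¹) := by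
  have hr : exp (-β) < 1 := by simpa using hβ
  have hgeo := hasSum_geometric_of_lt_one (exp_pos (-β)).le hr
  have hf0 := Int.fract_nonneg g
  have hf1 := Int.fract_lt_one g
  have hg := Int.floor_add_fract g
  rw [← (Equiv.addRight (⌊g⌋ + 1)).hasSum_iff, add_mul]
  apply HasSum.of_nat_of_neg_add_one
  · refine (hgeo.mul_left (exp (-β * (1 - Int.fract g)))).congr_fun fun n => ?_
    have hn : (0 : ℝ) ≤ n := n.cast_nonneg
    have habs : ((((n : ℤ) + (⌊g⌋ + 1) : ℤ) : ℝ)) - g = n + (1 - Int.fract g) := by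
      push_cast; linarith
    simp only [Function.comp, Equiv.coe_addRight]
    rw [habs, abs_of_nonneg (by linarith), ← exp_nat_mul, ← exp_add]
    ring_nf
  · refine (hgeo.mul_left (exp (-β * Int.fract g))).congr_fun fun n => ?_
    have hn : (0 : ℝ) ≤ n := n.cast_nonneg
    have habs : (((-((n : ℤ) + 1) + (⌊g⌋ + 1) : ℤ) : ℝ)) - g = -(n + Int.fract g) := by
      push_cast; linarith
    simp only [Function.comp, Equiv.coe_addRight]
    rw [habs, abs_neg, abs_of_nonneg (by linarith), ← exp_nat_mul, ← exp_add]
    ring_nf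

lemma partitionFunction_lt (g : ℝ) {β : ℝ} (hβ : 0 < β) :
    (exp (-β * (1 - Int.fract g)) + exp (-β * Int.fract g)) * (1 - exp (-β))⁻¹ < 1 + 2 / β := by
  have hr : exp (-β) < 1 := by simpa using hβ
  have hf0 := Int.fract_nonneg g
  have hf1 := Int.fract_lt_one g
  have ha : exp (-β * (1 - Int.fract g)) ≤ 1 := exp_le_one_iff.2 (by nlinarith)
  have hb : exp (-β * Int.fract g) ≤ 1 := exp_le_one_iff.2 (by nlinarith)
  have hab : exp (-β * (1 - Int.fract g)) * exp (-β * Int.fract g) = exp (-β) := by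
    rw [← exp_add]; ring_nf
  have hexp : exp (-β) * (β + 1) < 1 := by
    calc exp (-β) * (β + 1) < exp (-β) * exp β :=
          mul_lt_mul_of_pos_left (add_one_lt_exp hβ.ne') (exp_pos _)
      _ = 1 := by rw [← exp_add]; simp
  rw [← div_eq_mul_inv, div_lt_iff₀ (by linarith)]
  have hrhs : (1 + 2 / β) * (1 - exp (-β)) = ((β + 2) * (1 - exp (-β))) / β := by
    field_simp
  rw [hrhs, lt_div_iff₀ hβ]
  nlinarith [mul_nonneg (sub_nonneg.2 ha) (sub_nonneg.2 hb)]

/-- The pointwise form of Gibbs' inequality. -/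
lemma neg_mul_log_le_neg_mul_log_add_sub {p q : ℝ} (hp : 0 ≤ p) (hq : 0 < q) :
    -(p * log p) ≤ -(p * log q) + (q - p) := by
  rcases hp.eq_or_lt with rfl | hp
  · simpa using hq.le
  · have h := mul_le_mul_of_nonneg_left (log_le_sub_one_of_pos (div_pos hq hp)) hp.le
    rw [log_div hq.ne' hp.ne', mul_sub, mul_sub, mul_div_cancel₀ _ hp.ne'] at h
    linarith

/-- Gibbs' inequality against the weights `e ^ (-v n) / Z`. -/
lemma neg_tsum_mul_log_le_add_log {ι : Type*} {p v : ι → ℝ} {E Z : ℝ} (hp : ∀ n, 0 ≤ p n)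
    (hsum : HasSum p 1) (hE : HasSum (fun n => v n * p n) E)
    (hZ : HasSum (fun n => exp (-v n)) Z) (hZ0 : 0 < Z) :
    -∑' n, p n * log (p n) ≤ E + log Z := by
  have hbound : HasSum (fun n => v n * p n + p n * log Z + (exp (-v n) / Z - p n))
      (E + 1 * log Z + (Z / Z - 1)) :=
    (hE.add (hsum.mul_right _)).add ((hZ.div_const Z).sub hsum)
  have hle : ∀ n, -(p n * log (p n)) ≤ v n * p n + p n * log Z + (exp (-v n) / Z - p n) := by
    intro n
    have h := neg_mul_log_le_neg_mul_log_add_sub (hp n) (div_pos (exp_pos (-v n)) hZ0)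
    rw [log_div (exp_pos _).ne' hZ0.ne', log_exp] at h
    linarith
  have hnonneg : ∀ n, 0 ≤ -(p n * log (p n)) := fun n => by
    have hp1 : p n ≤ 1 := le_hasSum hsum n fun m _ => hp m
    have := mul_nonpos_of_nonneg_of_nonpos (hp n) (log_nonpos (hp n) hp1)
    linarith
  have hsummable := Summable.of_nonneg_of_le hnonneg hle hbound.summable
  have h := hasSum_le hle hsummable.hasSum hbound
  rw [tsum_neg, div_self hZ0.ne'] at h
  linarith

/-- For a probability distribution `p` on `ℤ` with finite mean absolute deviation
`M = ∑ |n - g|·p_n` from an arbitrary real number `g`, the Shannon entropy satisfies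
`H(p) < ln(2M + 1) + 1`.
(The convention `0·ln 0 = 0` holds automatically since `Real.log 0 = 0`.) -/
theorem entropy_lt_log_abs_mean (p : ℤ → ℝ) (hp : ∀ n, 0 ≤ p n) (hsum : HasSum p 1)
    (g : ℝ) (M : ℝ) (hM : HasSum (fun n : ℤ => |(n : ℝ) - g| * p n) M) :
    (-∑' n : ℤ, p n * Real.log (p n)) < Real.log (2 * M + 1) + 1 := by
  have hM0 : 0 ≤ M := hM.nonneg fun n => mul_nonneg (abs_nonneg _) (hp n)
  have key : ∀ β : ℝ, 0 < β →
      (-∑' n : ℤ, p n * Real.log (p n)) < β * M + log (1 + 2 / β) := by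
    intro β hβ
    have hZ := hasSum_exp_neg_mul_abs_sub g hβ
    simp only [neg_mul β |_|] at hZ
    have hr : exp (-β) < 1 := by simpa using hβ
    have hZ0 : 0 < (exp (-β * (1 - Int.fract g)) + exp (-β * Int.fract g)) *
        (1 - exp (-β))⁻¹ :=
      mul_pos (add_pos (exp_pos _) (exp_pos _)) (inv_pos.2 (sub_pos.2 hr))
    have hE : HasSum (fun n : ℤ => β * |(n : ℝ) - g| * p n) (β * M) := by
      simpa only [mul_assoc] using hM.mul_left β
    have hgibbs := neg_tsum_mul_log_le_add_log hp hsum hE hZ hZ0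
    have hlog := log_lt_log hZ0 (partitionFunction_lt g hβ)
    linarith
  rcases hM0.eq_or_lt with rfl | hMpos
  · have h := key 2 two_pos
    have h2 : log (1 + 2 / 2) < 1 := by
      norm_num
      linarith [log_two_lt_d9]
    simp only [mul_zero, zero_add, log_one] at h ⊢
    linarith
  · have h := key M⁻¹ (inv_pos.2 hMpos)
    rw [inv_mul_cancel₀ hMpos.ne', div_inv_eq_mul, add_comm 1 (2 * M)] at h
    linarith
end

section
/- Let n_max be a nonnegative integer, let ψ : ℤ → ℂ satisfy ψ_n = 0 unless 0 ≤ n ≤ n_max and ∑_{n∈ℤ} |ψ_n|² = 1, and define the canonical phase probability density on [-π, π] by p(θ) := (2π)^{-1}·|∑_{n∈ℤ} ψ_n e^{inθ}|². Then √(∫_{-π}^{π} θ²·p(θ) dθ) > √(2π/e) / (n_max + 1). -/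
open Real MeasureTheory Complex

/-- The trigonometric polynomial with coefficients `ψ n`, `n ∈ s`. -/
noncomputable def trigSum (s : Finset ℤ) (ψ : ℤ → ℂ) (θ : ℝ) : ℂ :=
  ∑ n ∈ s, ψ n * Complex.exp ((n : ℂ) * Complex.I * (θ : ℂ))

lemma continuous_trigSum (s : Finset ℤ) (ψ : ℤ → ℂ) : Continuous (trigSum s ψ) := by
  unfold trigSum
  fun_prop

lemma norm_exp_int_mul_I_mul (n : ℤ) (θ : ℝ) :
    ‖Complex.exp ((n : ℂ) * Complex.I * (θ : ℂ))‖ = 1 := by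
  rw [show (n : ℂ) * Complex.I * (θ : ℂ) = ((n * θ : ℝ) : ℂ) * Complex.I by push_cast; ring]
  exact Complex.norm_exp_ofReal_mul_I _

/-- Cauchy–Schwarz bound for a trigonometric polynomial. -/
lemma norm_trigSum_sq_le (s : Finset ℤ) (ψ : ℤ → ℂ) (θ : ℝ) :
    ‖trigSum s ψ θ‖ ^ 2 ≤ s.card * ∑ n ∈ s, ‖ψ n‖ ^ 2 := by
  have h : ‖trigSum s ψ θ‖ ≤ ∑ n ∈ s, ‖ψ n‖ := by
    refine (norm_sum_le _ _).trans_eq (Finset.sum_congr rfl fun n _ => ?_)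
    rw [norm_mul, norm_exp_int_mul_I_mul, mul_one]
  exact (pow_le_pow_left₀ (norm_nonneg _) h 2).trans sq_sum_le_card_mul_sum_sq

lemma integral_exp_int_mul_I_mul (n : ℤ) :
    ∫ θ in (-π)..π, Complex.exp ((n : ℂ) * Complex.I * (θ : ℂ)) =
      if n = 0 then 2 * (π : ℂ) else 0 := by
  split_ifs with h
  · simp [h]
    ring
  · rw [integral_exp_mul_complex (by simp [h])]
    have : Complex.exp ((n : ℂ) * Complex.I * (π : ℂ)) =
        Complex.exp ((n : ℂ) * Complex.I * ((-π : ℝ) : ℂ)) := by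
      rw [Complex.exp_eq_exp_iff_exists_int]
      exact ⟨n, by push_cast; ring⟩
    rw [this, sub_self, zero_div]

/-- Parseval's identity for a trigonometric polynomial. -/
lemma integral_norm_trigSum_sq (s : Finset ℤ) (ψ : ℤ → ℂ) :
    ∫ θ in (-π)..π, ‖trigSum s ψ θ‖ ^ 2 = 2 * π * ∑ n ∈ s, ‖ψ n‖ ^ 2 := by
  have expand (θ : ℝ) : ((‖trigSum s ψ θ‖ ^ 2 : ℝ) : ℂ) = ∑ n ∈ s, ∑ m ∈ s,
      ψ n * (starRingEnd ℂ) (ψ m) *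
        Complex.exp (((n - m : ℤ) : ℂ) * Complex.I * (θ : ℂ)) := by
    rw [Complex.ofReal_pow, ← Complex.mul_conj', trigSum, map_sum, Finset.sum_mul_sum]
    refine Finset.sum_congr rfl fun n _ => Finset.sum_congr rfl fun m _ => ?_
    rw [map_mul, ← Complex.exp_conj, mul_mul_mul_comm, ← Complex.exp_add]
    congr 2
    simp
    ring
  apply Complex.ofReal_injective
  rw [← intervalIntegral.integral_ofReal]
  simp_rw [expand]
  rw [intervalIntegral.integral_finsetSum
    fun n _ => (by fun_prop : Continuous _).intervalIntegrable _ _]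
  rw [Finset.mul_sum, Complex.ofReal_sum]
  refine Finset.sum_congr rfl fun n hn => ?_
  rw [intervalIntegral.integral_finsetSum
    fun m _ => (by fun_prop : Continuous _).intervalIntegrable _ _]
  simp_rw [intervalIntegral.integral_const_mul, integral_exp_int_mul_I_mul, sub_eq_zero]
  simp only [mul_ite, mul_zero, Finset.sum_ite_eq, hn, if_true]
  rw [Complex.mul_conj']
  push_cast
  ring

/-- Among the densities bounded by `M`, the second moment is minimized by the flat one; here in the
form of a bound depending on the cut-off `a`. -/
lemma second_moment_ge_of_le {p : ℝ → ℝ} (hp : Continuous p) (hp0 : ∀ θ, 0 ≤ p θ) {M a b : ℝ}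
    (hpM : ∀ θ, p θ ≤ M) (ha : 0 ≤ a) (hab : a ≤ b) :
    a ^ 2 * (∫ θ in (-b)..b, p θ) - 4 / 3 * M * a ^ 3 ≤ ∫ θ in (-b)..b, θ ^ 2 * p θ := by
  have cont : Continuous fun θ : ℝ => (θ ^ 2 - a ^ 2) * p θ := by fun_prop
  have inner : ∫ θ in (-a)..a, (θ ^ 2 - a ^ 2) * M ≤ ∫ θ in (-a)..a, (θ ^ 2 - a ^ 2) * p θ := by
    refine intervalIntegral.integral_mono_on (by linarith)
      ((by fun_prop : Continuous _).intervalIntegrable _ _) (cont.intervalIntegrable _ _)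
      fun θ hθ => ?_
    exact mul_le_mul_of_nonpos_left (hpM θ) (by nlinarith [hθ.1, hθ.2])
  have left : 0 ≤ ∫ θ in (-b)..(-a), (θ ^ 2 - a ^ 2) * p θ :=
    intervalIntegral.integral_nonneg (by linarith) fun θ hθ =>
      mul_nonneg (by nlinarith [hθ.1, hθ.2]) (hp0 θ)
  have right : 0 ≤ ∫ θ in a..b, (θ ^ 2 - a ^ 2) * p θ :=
    intervalIntegral.integral_nonneg hab fun θ hθ =>
      mul_nonneg (by nlinarith [hθ.1, hθ.2]) (hp0 θ)
  have split : (∫ θ in (-b)..(-a), (θ ^ 2 - a ^ 2) * p θ) +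
      (∫ θ in (-a)..a, (θ ^ 2 - a ^ 2) * p θ) + (∫ θ in a..b, (θ ^ 2 - a ^ 2) * p θ) =
      ∫ θ in (-b)..b, (θ ^ 2 - a ^ 2) * p θ := by
    rw [intervalIntegral.integral_add_adjacent_intervals (cont.intervalIntegrable _ _)
      (cont.intervalIntegrable _ _), intervalIntegral.integral_add_adjacent_intervals
      (cont.intervalIntegrable _ _) (cont.intervalIntegrable _ _)]
  have flat : ∫ θ in (-a)..a, (θ ^ 2 - a ^ 2) * M = -(4 / 3 * M * a ^ 3) := by
    rw [intervalIntegral.integral_mul_const, intervalIntegral.integral_sub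
      ((by fun_prop : Continuous _).intervalIntegrable _ _)
      ((by fun_prop : Continuous _).intervalIntegrable _ _)]
    simp
    ring
  have total : ∫ θ in (-b)..b, (θ ^ 2 - a ^ 2) * p θ =
      (∫ θ in (-b)..b, θ ^ 2 * p θ) - a ^ 2 * ∫ θ in (-b)..b, p θ := by
    simp_rw [sub_mul]
    rw [intervalIntegral.integral_sub ((by fun_prop : Continuous _).intervalIntegrable _ _)
      ((by fun_prop : Continuous _).intervalIntegrable _ _), intervalIntegral.integral_const_mul]
  linarith

/-- Heisenberg-type bound for a generator with eigenvalues confined to `{0, …, n_max}`.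
For a unit vector `ψ` supported on `{0, …, n_max}`, the canonical phase probability
density `p(θ) = (2π)⁻¹ ‖∑ₙ ψ_n e^{inθ}‖²` satisfies
`√(∫ θ² p(θ) dθ) > √(2π/e)/(n_max + 1)`. -/
theorem canonical_phase_bound_finite_range (nmax : ℕ) (ψ : ℤ → ℂ)
    (hsupp : ∀ n : ℤ, ψ n ≠ 0 → 0 ≤ n ∧ n ≤ (nmax : ℤ))
    (hnorm : HasSum (fun n : ℤ => ‖ψ n‖ ^ 2) 1) :
    Real.sqrt (∫ θ in (-Real.pi)..Real.pi,
        θ ^ 2 * (‖∑' n : ℤ, ψ n * Complex.exp ((n : ℂ) * Complex.I * (θ : ℂ))‖ ^ 2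
          / (2 * Real.pi)))
      > Real.sqrt (2 * Real.pi / Real.exp 1) / ((nmax : ℝ) + 1) := by
  set s : Finset ℤ := Finset.Icc 0 (nmax : ℤ) with hs
  have zero_off (n : ℤ) (hn : n ∉ s) : ψ n = 0 := by
    by_contra h
    exact hn (Finset.mem_Icc.2 (hsupp n h))
  have card : (s.card : ℝ) = nmax + 1 := by
    have : s.card = nmax + 1 := by simp [hs]
    exact_mod_cast this
  have sum_one : ∑ n ∈ s, ‖ψ n‖ ^ 2 = 1 := by
    rw [← hnorm.tsum_eq, tsum_eq_sum fun n hn => by simp [zero_off n hn]]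
  have tsum_eq (θ : ℝ) :
      ∑' n : ℤ, ψ n * Complex.exp ((n : ℂ) * Complex.I * (θ : ℂ)) = trigSum s ψ θ :=
    tsum_eq_sum fun n hn => by simp [zero_off n hn]
  simp_rw [tsum_eq]
  have N_pos : (0 : ℝ) < nmax + 1 := by positivity
  have moment := second_moment_ge_of_le (p := fun θ => ‖trigSum s ψ θ‖ ^ 2 / (2 * π))
    (M := (nmax + 1) / (2 * π)) (a := π / (nmax + 1)) (b := π)
    (((continuous_trigSum s ψ).norm.pow 2).div_const _) (fun θ => by positivity)
    (fun θ => by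
      have := norm_trigSum_sq_le s ψ θ
      rw [sum_one, card, mul_one] at this
      gcongr)
    (by positivity) (div_le_self pi_pos.le (by simp))
  rw [intervalIntegral.integral_div, integral_norm_trigSum_sq, sum_one, mul_one,
    div_self (by positivity)] at moment
  rw [gt_iff_lt, ← Real.sqrt_sq N_pos.le, ← Real.sqrt_div' _ (by positivity)]
  refine Real.sqrt_lt_sqrt (by positivity) (lt_of_lt_of_le ?_ moment)
  have simplified : (π / (nmax + 1 : ℝ)) ^ 2 * 1 -
      4 / 3 * ((nmax + 1) / (2 * π)) * (π / (nmax + 1)) ^ 3 = π ^ 2 / 3 / (nmax + 1) ^ 2 := by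
    field_simp
    ring
  rw [simplified]
  refine div_lt_div_of_pos_right ?_ (by positivity)
  rw [div_lt_div_iff₀ (Real.exp_pos 1) (by norm_num)]
  nlinarith [pi_gt_three, Real.exp_one_gt_d9,
    mul_lt_mul'' pi_gt_three Real.exp_one_gt_d9 (by norm_num) (by norm_num), pi_pos]
end

section
/- Let n be a nonnegative integer and let ψ : {0, 1, …, n} → ℂ satisfy ∑_{k=0}^{n} |ψ_k|² = 1. Then |∑_{k=0}^{n-1} ψ_{k+1}·conj(ψ_k)| ≤ cos(π/(n+2)). -/
open Real Complex

/-- The weighted form of `2 a b ≤ a² + b²`. -/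
lemma two_mul_le_div_mul_sq_add {p q : ℝ} (hp : 0 < p) (hq : 0 < q) (a b : ℝ) :
    2 * (b * a) ≤ q / p * a ^ 2 + p / q * b ^ 2 := by
  have h : q / p * a ^ 2 + p / q * b ^ 2 - 2 * (b * a) = (q * a - p * b) ^ 2 / (p * q) := by
    field_simp
    ring
  have : 0 ≤ (q * a - p * b) ^ 2 / (p * q) := by positivity
  linarith

lemma sin_add_two_mul (x θ : ℝ) :
    Real.sin (x + 2 * θ) = 2 * Real.cos θ * Real.sin (x + θ) - Real.sin x := by
  rw [show x + 2 * θ = (x + θ) + θ by ring, Real.sin_add (x + θ) θ]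
  conv_rhs => rw [show Real.sin x = Real.sin ((x + θ) - θ) by ring_nf, Real.sin_sub (x + θ) θ]
  ring

/-- The path-graph quadratic form is bounded by `2 cos θ` times the squared norm, with the
remainder given by the ratio of consecutive values `sin ((k + 1) θ)`, as long as these values
are positive. -/
lemma two_mul_sum_mul_succ_add_le (θ : ℝ) (a : ℕ → ℝ) (m : ℕ)
    (hpos : ∀ k ≤ m, 0 < Real.sin ((k + 1) * θ)) :
    2 * ∑ k ∈ Finset.range m, a (k + 1) * a k
        + Real.sin ((m + 2) * θ) / Real.sin ((m + 1) * θ) * a m ^ 2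
      ≤ 2 * Real.cos θ * ∑ k ∈ Finset.range (m + 1), a k ^ 2 := by
  induction m with
  | zero =>
    have h : 0 < Real.sin θ := by simpa using hpos 0 le_rfl
    simp only [Finset.range_zero, Finset.sum_empty, CharP.cast_eq_zero, zero_add, one_mul,
      Finset.sum_range_one, Real.sin_two_mul]
    apply le_of_eq
    field_simp
    ring
  | succ m ih =>
    have hp := hpos m m.le_succ
    have hq := hpos (m + 1) le_rfl
    have ih := ih fun k hk => hpos k (hk.trans m.le_succ)
    have hrec := sin_add_two_mul ((m + 1) * θ) θ
    push_cast at hq ⊢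
    rw [show (m + 1 + 1 : ℝ) * θ = (m + 2) * θ by ring] at hq ⊢
    rw [show (m + 1 : ℝ) * θ + 2 * θ = (m + 1 + 2) * θ by ring,
      show (m + 1 : ℝ) * θ + θ = (m + 2) * θ by ring] at hrec
    have hstep := two_mul_le_div_mul_sq_add hp hq (a m) (a (m + 1))
    rw [hrec, sub_div, mul_div_cancel_right₀ _ hq.ne', Finset.sum_range_succ,
      Finset.sum_range_succ _ (m + 1)]
    linarith

/-- For a state `ψ` with number support `{0, …, n}` and unit norm, the canonical mean
`|⟨e^{iΘ}⟩| = |∑_{k=0}^{n-1} ψ_{k+1} conj(ψ_k)|` is at most `cos (π/(n+2))`. -/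
theorem canonical_mean_le_cos (n : ℕ) (ψ : ℕ → ℂ)
    (hnorm : ∑ k ∈ Finset.range (n + 1), ‖ψ k‖ ^ 2 = 1) :
    ‖∑ k ∈ Finset.range n, ψ (k + 1) * (starRingEnd ℂ) (ψ k)‖
      ≤ Real.cos (Real.pi / ((n : ℝ) + 2)) := by
  have hn : (0 : ℝ) < n + 2 := by positivity
  have hpos : ∀ k ≤ n, 0 < Real.sin ((k + 1) * (Real.pi / ((n : ℝ) + 2))) := by
    intro k hk
    have hk' : (k : ℝ) ≤ n := by exact_mod_cast hk
    apply Real.sin_pos_of_pos_of_lt_pi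
    · positivity
    · rw [mul_div_assoc', div_lt_iff₀ hn]
      nlinarith [Real.pi_pos]
  have hbound := two_mul_sum_mul_succ_add_le _ (fun k => ‖ψ k‖) n hpos
  rw [mul_div_cancel₀ _ hn.ne', Real.sin_pi, hnorm, zero_div, zero_mul] at hbound
  have htri : ‖∑ k ∈ Finset.range n, ψ (k + 1) * (starRingEnd ℂ) (ψ k)‖
      ≤ ∑ k ∈ Finset.range n, ‖ψ (k + 1)‖ * ‖ψ k‖ :=
    (norm_sum_le _ _).trans_eq (by simp)
  linarith
end

section
/- Let ψ : ℤ → ℂ satisfy ∑_{n∈ℤ} |ψ_n|² = 1 and suppose A := ∑_{n∈ℤ} |n|·|ψ_n|² is finite. Then for every real ε, the quantity c := |∑_{n∈ℤ} |ψ_n|²·e^{-inε}| satisfies 2·√(1 - c²) ≤ 2·√(2·A·|ε|). -/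
open Real Complex

/-- The phase `e^{-inε}` is within `|n| |ε|` of `1`. -/
lemma norm_one_sub_exp_neg_int_mul_le (n : ℤ) (ε : ℝ) :
    ‖1 - Complex.exp (-(n : ℂ) * Complex.I * (ε : ℂ))‖ ≤ |(n : ℝ)| * |ε| := by
  have h := Real.norm_exp_I_mul_ofReal_sub_one_le (x := -(n : ℝ) * ε)
  rw [norm_sub_rev, show -(n : ℂ) * Complex.I * (ε : ℂ) = Complex.I * ((-(n : ℝ) * ε : ℝ) : ℂ) by
    push_cast; ring]
  simpa [abs_mul] using h

/-- For a unit vector `ψ ∈ ℓ²(ℤ)` with finite `⟨|G|⟩ = A = ∑ |n| |ψ_n|²`, the trace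
distance `2√(1 - c²)` between `|ψ⟩⟨ψ|` and its phase-shifted image, where
`c = |∑ |ψ_n|² e^{-inε}|`, is at most `2√(2·A·|ε|)`. -/
theorem trace_distance_le (ψ : ℤ → ℂ)
    (hnorm : HasSum (fun n : ℤ => ‖ψ n‖ ^ 2) 1)
    (A : ℝ) (hA : HasSum (fun n : ℤ => |(n : ℝ)| * ‖ψ n‖ ^ 2) A) (ε : ℝ)
    (c : ℝ)
    (hc : c = ‖∑' n : ℤ, (‖ψ n‖ ^ 2 : ℂ) * Complex.exp (-(n : ℂ) * Complex.I * (ε : ℂ))‖) :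
    2 * Real.sqrt (1 - c ^ 2) ≤ 2 * Real.sqrt (2 * A * |ε|) := by
  have hnormC : HasSum (fun n : ℤ => (‖ψ n‖ ^ 2 : ℂ)) 1 := by
    simpa using Complex.hasSum_ofReal.mpr hnorm
  have hnorm_exp (n : ℤ) : ‖Complex.exp (-(n : ℂ) * Complex.I * (ε : ℂ))‖ = 1 := by
    simp [Complex.norm_exp]
  have hsum : Summable fun n : ℤ =>
      (‖ψ n‖ ^ 2 : ℂ) * Complex.exp (-(n : ℂ) * Complex.I * (ε : ℂ)) :=
    Summable.of_norm_bounded hnorm.summable fun n => by rw [norm_mul, hnorm_exp]; simp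
  have hdiff := hnormC.sub hsum.hasSum
  have hdist : ‖1 - ∑' n : ℤ, (‖ψ n‖ ^ 2 : ℂ) *
      Complex.exp (-(n : ℂ) * Complex.I * (ε : ℂ))‖ ≤ A * |ε| := by
    rw [← hdiff.tsum_eq]
    refine tsum_of_norm_bounded (hA.mul_right |ε|) fun n => ?_
    rw [← mul_one_sub, norm_mul]
    calc ‖(‖ψ n‖ ^ 2 : ℂ)‖ * ‖1 - Complex.exp (-(n : ℂ) * Complex.I * (ε : ℂ))‖
        ≤ ‖ψ n‖ ^ 2 * (|(n : ℝ)| * |ε|) := by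
          simpa using mul_le_mul_of_nonneg_left
            (norm_one_sub_exp_neg_int_mul_le n ε) (sq_nonneg ‖ψ n‖)
      _ = |(n : ℝ)| * ‖ψ n‖ ^ 2 * |ε| := by ring
  have hone_sub : 1 - c ≤ A * |ε| := by
    rw [hc]
    simpa using (norm_sub_norm_le (1 : ℂ) _).trans hdist
  gcongr
  nlinarith [sq_nonneg (1 - c)]
end

section
/- Let μ be a probability measure supported on the interval [-π, π] such that ∫ sin θ dμ(θ) = 0 and c := ∫ cos θ dμ(θ) > 0, and define the Holevo variance V := c^{-2} - 1. Then ∫ θ² dμ(θ) ≥ (arccos((V+1)^{-1/2}))². -/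
open Real MeasureTheory

/-- On `[0, π]` the function `sin x / x` is decreasing, stated without division. -/
theorem mul_sin_le_mul_sin {x y : ℝ} (hx : 0 ≤ x) (hxy : x ≤ y) (hy : y ≤ π) :
    x * sin y ≤ y * sin x := by
  rcases (hx.trans hxy).eq_or_lt with h0 | h0
  · obtain rfl : x = 0 := le_antisymm (h0 ▸ hxy) hx
    simp [← h0]
  have h := strictConcaveOn_sin_Icc.concaveOn.2 (⟨le_rfl, pi_pos.le⟩ : (0 : ℝ) ∈ Set.Icc 0 π)
    (⟨h0.le, hy⟩ : y ∈ Set.Icc 0 π) (sub_nonneg.2 ((div_le_one h0).2 hxy))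
    (div_nonneg hx h0.le) (sub_add_cancel 1 (x / y))
  simp only [smul_eq_mul, sin_zero, mul_zero, zero_add, div_mul_cancel₀ x h0.ne'] at h
  calc x * sin y = y * (x / y * sin y) := by field_simp
    _ ≤ y * sin x := by gcongr

/-- The tangent line bound expressing that `cos` is a convex function of the square of its
argument on `[0, π]`. -/
theorem cos_add_mul_sq_le {a t : ℝ} (ha : 0 < a) (haπ : a ≤ π) (ht : 0 ≤ t) (htπ : t ≤ π) :
    cos a + sin a / (2 * a) * a ^ 2 ≤ cos t + sin a / (2 * a) * t ^ 2 := by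
  set f : ℝ → ℝ := fun x ↦ cos x + sin a / (2 * a) * x ^ 2
  have hd (x : ℝ) : HasDerivAt f ((x * sin a - a * sin x) / a) x := by
    refine ((hasDerivAt_cos x).add
      ((hasDerivAt_pow 2 x).const_mul (sin a / (2 * a)))).congr_deriv ?_
    field_simp
    ring
  have hcont : Continuous f := by fun_prop
  rcases le_total t a with h | h
  · refine antitoneOn_of_deriv_nonpos (convex_Icc 0 a) hcont.continuousOn
      (fun x _ ↦ (hd x).differentiableAt.differentiableWithinAt) (fun x hx ↦ ?_)
      ⟨ht, h⟩ ⟨ha.le, le_rfl⟩ h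
    rw [interior_Icc] at hx
    rw [(hd x).deriv]
    exact div_nonpos_of_nonpos_of_nonneg
      (sub_nonpos.2 (mul_sin_le_mul_sin hx.1.le hx.2.le haπ)) ha.le
  · refine monotoneOn_of_deriv_nonneg (convex_Icc a π) hcont.continuousOn
      (fun x _ ↦ (hd x).differentiableAt.differentiableWithinAt) (fun x hx ↦ ?_)
      ⟨le_rfl, haπ⟩ ⟨h, htπ⟩ h
    rw [interior_Icc] at hx
    rw [(hd x).deriv]
    exact div_nonneg (sub_nonneg.2 (mul_sin_le_mul_sin ha.le hx.1.le hx.2.le)) ha.le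

/-- For an unbiased phase-error distribution `μ` supported on `[-π, π]`
(`∫ sin θ dμ = 0`, `c := ∫ cos θ dμ > 0`) with Holevo variance `V := c⁻² - 1`,
one has `∫ θ² dμ ≥ (arccos ((V+1)^{-1/2}))²`. -/
theorem integral_sq_ge_arccos_sq_of_holevo (μ : Measure ℝ) [IsProbabilityMeasure μ]
    (hsupp : ∀ᵐ θ ∂μ, θ ∈ Set.Icc (-Real.pi) Real.pi)
    (hsin : (∫ θ, Real.sin θ ∂μ) = 0)
    (c : ℝ) (hc : c = ∫ θ, Real.cos θ ∂μ) (hcpos : 0 < c)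
    (V : ℝ) (hV : V = 1 / c ^ 2 - 1) :
    (∫ θ, θ ^ 2 ∂μ) ≥ Real.arccos (1 / Real.sqrt (V + 1)) ^ 2 := by
  have hVc : 1 / √(V + 1) = c := by
    rw [hV, sub_add_cancel, sqrt_div zero_le_one, sqrt_one, sqrt_sq hcpos.le, one_div_one_div]
  rw [hVc, ge_iff_le]
  have hcos_int : Integrable cos μ :=
    Integrable.of_bound continuous_cos.aestronglyMeasurable 1
      (Filter.Eventually.of_forall fun θ ↦ abs_cos_le_one θ)
  have hsq_int : Integrable (fun θ : ℝ ↦ θ ^ 2) μ := by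
    refine Integrable.of_bound (by fun_prop) (π ^ 2) ?_
    filter_upwards [hsupp] with θ hθ
    rw [norm_of_nonneg (sq_nonneg θ)]
    exact sq_le_sq.2 ((abs_le.2 hθ).trans (le_abs_self π))
  rcases (arccos_nonneg c).eq_or_lt with ha | ha
  · rw [← ha, zero_pow two_ne_zero]
    exact integral_nonneg fun θ ↦ sq_nonneg θ
  have hc1 : c < 1 := arccos_pos.1 ha
  set a := arccos c with ha_def
  have haπ : a < π := (arccos_lt_pi_div_two.2 hcpos).trans (half_lt_self pi_pos)
  have hk : 0 < sin a / (2 * a) := div_pos (sin_pos_of_pos_of_lt_pi ha haπ) (by positivity)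
  have hmono := integral_mono_ae (μ := μ) (integrable_const (cos a + sin a / (2 * a) * a ^ 2))
    (hcos_int.add (hsq_int.const_mul (sin a / (2 * a)))) <| by
      filter_upwards [hsupp] with θ hθ
      simpa using cos_add_mul_sq_le ha haπ.le (abs_nonneg θ) (abs_le.2 hθ)
  simp only [Pi.add_apply] at hmono
  rw [integral_add hcos_int (hsq_int.const_mul _), integral_const_mul, ← hc,
    integral_const, probReal_univ, one_smul, ha_def, cos_arccos (by linarith) hc1.le,
    ← ha_def] at hmono
  exact le_of_mul_le_mul_left (by linarith) hk
end
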